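/- arXiv:1809.02434 — 6 statements merged into one kernel-verified Lean document; each statement's English description precedes it below -/
import Mathlib

section
/- Let G = (V,E) be a finite simple graph, let W_1, …, W_t ⊆ V be subsets, and suppose there exists at least one nonempty subset of V distinct from every W_i. Call a pair (U_1, U_2) of disjoint subsets of V with |U_1| + |U_2| ≤ t admissible if no W_j (1 ≤ j ≤ t) satisfies both W_j ⊇ U_1 and W_j ∩ U_2 = ∅. Then the maximum of dens(Z) over all nonempty Z ⊆ V with Z ≠ W_i for every i equals the maximum, over admissible pairs (U_1, U_2), of the maximum of dens(Z) over all nonempty Z with U_1 ⊆ Z ⊆ V \ U_2. -/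
open Finset

/-- The number of edges of `G` with both endpoints in `U`. -/
noncomputable def edgeCount {V : Type*} (G : SimpleGraph V) (U : Finset V) : ℕ :=
  Set.ncard {e : Sym2 V | e ∈ G.edgeSet ∧ ∀ v ∈ e, v ∈ U}

/-- The density of the subgraph of `G` induced by `U`. -/
noncomputable def dens {V : Type*} (G : SimpleGraph V) (U : Finset V) : ℝ :=
  (edgeCount G U : ℝ) / U.card

/-! If `Z` differs from every `W i`, choose for each `i` one vertex on which `Z` and `W i` disagree.
The chosen vertices inside `Z` form `U₁`, the others form `U₂`; together there are at most as many
as there are indices, and no `W i` contains `U₁` and avoids `U₂`. -/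

section Separation

variable {ι A V : Type*} [SetLike A V]

theorem exists_card_le_forall_exists_not_mem_iff_mem [Fintype ι] {Z : A} {W : ι → A}
    (h : ∀ i, Z ≠ W i) :
    ∃ S : Finset V, #S ≤ Fintype.card ι ∧ ∀ i, ∃ v ∈ S, ¬ (v ∈ Z ↔ v ∈ W i) := by
  classical
  choose v hv using fun i ↦ not_forall.1 (mt SetLike.ext (h i))
  exact ⟨univ.image v, card_image_le, fun i ↦ ⟨v i, mem_image_of_mem v (mem_univ i), hv i⟩⟩

/-- The paper's admissible pairs `(U₁, U₂)`, which certify that every set containing `U₁` and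
avoiding `U₂` is distinct from all `W i`. The size bound `t` of the paper is the cardinality of the
index type, and `W i ∩ U₂ = ∅` is expressed by `Disjoint`. -/
def IsAdmissible [Fintype ι] (W : ι → A) (U₁ U₂ : Finset V) : Prop :=
  Disjoint U₁ U₂ ∧ #U₁ + #U₂ ≤ Fintype.card ι ∧
    ∀ i, ¬ ((U₁ : Set V) ⊆ W i ∧ Disjoint (W i : Set V) U₂)

variable [Fintype ι] {W : ι → A}

theorem IsAdmissible.ne {U₁ U₂ : Finset V} {Z : A} (hU : IsAdmissible W U₁ U₂)
    (h₁ : (U₁ : Set V) ⊆ Z) (h₂ : Disjoint (Z : Set V) U₂) (i : ι) : Z ≠ W i := by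
  rintro rfl
  exact hU.2.2 i ⟨h₁, h₂⟩

theorem isAdmissible_filter_mem_filter_notMem {Z : A} [DecidablePred (· ∈ Z)] {S : Finset V}
    (hcard : #S ≤ Fintype.card ι) (hS : ∀ i, ∃ v ∈ S, ¬ (v ∈ Z ↔ v ∈ W i)) :
    IsAdmissible W {v ∈ S | v ∈ Z} {v ∈ S | v ∉ Z} := by
  refine ⟨disjoint_filter_filter_not .., (card_filter_add_card_filter_not _).trans_le hcard, ?_⟩
  rintro i ⟨hsub, hdisj⟩
  obtain ⟨v, hvS, hv⟩ := hS i
  refine hv ⟨fun hvZ ↦ hsub (mem_filter.2 ⟨hvS, hvZ⟩), fun hvW ↦ ?_⟩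
  by_contra hvZ
  exact Set.disjoint_left.1 hdisj hvW (mem_filter.2 ⟨hvS, hvZ⟩)

theorem forall_ne_iff_exists_isAdmissible {Z : A} :
    (∀ i, Z ≠ W i) ↔ ∃ U₁ U₂ : Finset V,
      IsAdmissible W U₁ U₂ ∧ (U₁ : Set V) ⊆ Z ∧ Disjoint (Z : Set V) U₂ := by
  classical
  refine ⟨fun h ↦ ?_, fun ⟨U₁, U₂, hU, h₁, h₂⟩ ↦ hU.ne h₁ h₂⟩
  obtain ⟨S, hcard, hS⟩ := exists_card_le_forall_exists_not_mem_iff_mem h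
  exact ⟨_, _, isAdmissible_filter_mem_filter_notMem hcard hS,
    fun v hv ↦ (mem_filter.1 hv).2,
    Set.disjoint_right.2 fun v hv ↦ (mem_filter.1 hv).2⟩

end Separation

theorem stmt_1_general {ι A V α : Type*} [SetLike A V] [Fintype ι] (W : ι → A) (p : A → Prop)
    (f : A → α) :
    {x | ∃ Z, p Z ∧ (∀ i, Z ≠ W i) ∧ x = f Z} =
    {x | ∃ (U₁ U₂ : Finset V) (Z : A), IsAdmissible W U₁ U₂ ∧
      p Z ∧ (U₁ : Set V) ⊆ Z ∧ Disjoint (Z : Set V) U₂ ∧ x = f Z} := by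
  ext x
  simp only [Set.mem_ofPred_eq, forall_ne_iff_exists_isAdmissible (V := V)]
  constructor
  · rintro ⟨Z, hZ, ⟨U₁, U₂, hU, h₁, h₂⟩, hx⟩
    exact ⟨U₁, U₂, Z, hU, hZ, h₁, h₂, hx⟩
  · rintro ⟨U₁, U₂, Z, hU, hZ, h₁, h₂, hx⟩
    exact ⟨Z, hZ, ⟨U₁, U₂, hU, h₁, h₂⟩, hx⟩

/-- Theorem 5 of the paper, correctness of Algorithm 1. -/
theorem stmt_1 {V : Type*} [Fintype V] [DecidableEq V]
    (G : SimpleGraph V) {t : ℕ} (W : Fin t → Finset V)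
    (hex : ∃ Z : Finset V, Z.Nonempty ∧ ∀ i, Z ≠ W i) :
    sSup {x : ℝ | ∃ Z : Finset V, Z.Nonempty ∧ (∀ i, Z ≠ W i) ∧ x = dens G Z} =
    sSup {x : ℝ | ∃ U₁ U₂ Z : Finset V, Disjoint U₁ U₂ ∧ U₁.card + U₂.card ≤ t ∧
      (∀ j : Fin t, ¬ (U₁ ⊆ W j ∧ W j ∩ U₂ = ∅)) ∧
      Z.Nonempty ∧ U₁ ⊆ Z ∧ Z ⊆ U₂ᶜ ∧ x = dens G Z} := by
  simpa only [IsAdmissible, Fintype.card_fin, coe_subset, disjoint_coe, disjoint_iff_inter_eq_empty,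
    subset_compl_iff_disjoint_right, and_assoc]
    using congrArg sSup (stmt_1_general W Finset.Nonempty (dens G))
end

section
/- Let G = (V,E) be a finite simple graph, let k ≥ 1, and let W_1, …, W_k be pairwise distinct nonempty subsets of V such that W_1 has maximum density among all nonempty subsets of V and, for each 2 ≤ i ≤ k, W_i has maximum density among all nonempty subsets of V distinct from each of W_1, …, W_{i-1}. Then for every λ > 0 and every tuple W°_1, …, W°_k of pairwise distinct nonempty subsets of V, one has ∑_{i=1}^k dens(W_i) ≥ ∑_{i=1}^k dens(W°_i) and λ·∑_{1≤i<j≤k} d(W_i,W_j) ≥ (1/2)·λ·∑_{1≤i<j≤k} d(W°_i,W°_j). -/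
open Finset

/-- The distance between two finite sets used in the paper. -/
noncomputable def ddist {α : Type*} [DecidableEq α] (U Z : Finset α) : ℝ :=
  if U = Z then 0 else 2 - ((U ∩ Z).card : ℝ) ^ 2 / ((U.card : ℝ) * (Z.card : ℝ))

/-!
The `k` densest sets dominate any other `k` sets in total density by exchange: cancel the common
members, and every remaining competitor lies outside the family `W`, so it is no denser than any
member of `W`. For the distances, the subtracted term `|U ∩ Z|² / (|U| |Z|)` lies in `[0, 1]`, so
distances of distinct sets lie in `[1, 2]` and any two of them differ by at most a factor `2`.
-/

section Exchange

variable {ι α M : Type*} [AddCommMonoid M] [PartialOrder M] [IsOrderedAddMonoid M]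

theorem sum_le_sum_of_card_eq_of_forall_le {s t : Finset α} {f : α → M}
    (hst : #s = #t) (hf : ∀ a ∈ s, ∀ b ∈ t, f a ≤ f b) : ∑ a ∈ s, f a ≤ ∑ b ∈ t, f b := by
  let e : s ≃ t := s.equivOfCardEq hst
  calc ∑ a ∈ s, f a = ∑ a : s, f a := (sum_coe_sort s f).symm
    _ ≤ ∑ a : s, f (e a) := sum_le_sum fun a _ ↦ hf a a.2 (e a) (e a).2
    _ = ∑ b : t, f b := e.sum_comp fun b ↦ f b
    _ = ∑ b ∈ t, f b := sum_coe_sort t f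

theorem sum_comp_le_sum_comp_of_forall_notMem_range [Fintype ι] {z w : ι → α} {f : α → M}
    (hz : z.Injective) (hw : w.Injective)
    (hf : ∀ i j, z i ∉ Set.range w → f (z i) ≤ f (w j)) : ∑ i, f (z i) ≤ ∑ i, f (w i) := by
  classical
  let Z : Finset α := univ.map ⟨z, hz⟩
  let W : Finset α := univ.map ⟨w, hw⟩
  have card_eq : #(Z \ W) = #(W \ Z) := card_sdiff_comm (by simp [Z, W])
  have exchange : ∀ a ∈ Z \ W, ∀ b ∈ W \ Z, f a ≤ f b := by
    simp only [Z, W, mem_sdiff, mem_map, mem_univ, true_and, Function.Embedding.coeFn_mk]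
    rintro _ ⟨⟨i, rfl⟩, hi⟩ _ ⟨⟨j, rfl⟩, -⟩
    exact hf i j hi
  have sum_le : ∑ a ∈ Z, f a ≤ ∑ b ∈ W, f b := by
    rw [← sum_inter_add_sum_sdiff Z W, ← sum_inter_add_sum_sdiff W Z, inter_comm W Z]
    exact add_le_add_right (sum_le_sum_of_card_eq_of_forall_le card_eq exchange) _
  simpa only [Z, W, sum_map, Function.Embedding.coeFn_mk] using sum_le

end Exchange

section Distance

variable {α : Type*} [DecidableEq α]

theorem ddist_le_two (U Z : Finset α) : ddist U Z ≤ 2 := by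
  rw [ddist]
  split_ifs
  · exact zero_le_two
  · exact sub_le_self 2 (by positivity)

theorem card_inter_sq_le_card_mul_card (U Z : Finset α) : #(U ∩ Z) ^ 2 ≤ #U * #Z := by
  rw [sq]
  exact Nat.mul_le_mul (card_le_card inter_subset_left) (card_le_card inter_subset_right)

theorem one_le_ddist {U Z : Finset α} (hU : U.Nonempty) (hZ : Z.Nonempty) (hUZ : U ≠ Z) :
    1 ≤ ddist U Z := by
  have card_mul_pos : (0 : ℝ) < #U * #Z := mod_cast mul_pos hU.card_pos hZ.card_pos
  have ratio_le_one : (#(U ∩ Z) : ℝ) ^ 2 / (#U * #Z) ≤ 1 :=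
    (div_le_one card_mul_pos).2 (mod_cast card_inter_sq_le_card_mul_card U Z)
  rw [ddist, if_neg hUZ]
  linarith

theorem half_mul_sum_ddist_le_sum_ddist {ι : Type*} [Fintype ι] [Preorder ι] [DecidableLT ι]
    {W : ι → Finset α} (hWne : ∀ i, (W i).Nonempty) (hW : W.Injective) (Z : ι → Finset α) :
    1 / 2 * (∑ i, ∑ j, if i < j then ddist (Z i) (Z j) else 0) ≤
      ∑ i, ∑ j, if i < j then ddist (W i) (W j) else 0 := by
  simp only [mul_sum]
  refine sum_le_sum fun i _ ↦ sum_le_sum fun j _ ↦ ?_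
  split_ifs with hij
  · have one_le : 1 ≤ ddist (W i) (W j) := one_le_ddist (hWne i) (hWne j) (hW.ne hij.ne)
    linarith [ddist_le_two (Z i) (Z j)]
  · exact (mul_zero _).le

end Distance

theorem stmt_3_general {V ι : Type*} [DecidableEq V] [Fintype ι] [Preorder ι] [DecidableLT ι]
    (G : SimpleGraph V) {W : ι → Finset V} (hWne : ∀ i, (W i).Nonempty) (hW : W.Injective)
    (hmax : ∀ i, ∀ Z : Finset V, Z.Nonempty → Z ∉ Set.range W → dens G Z ≤ dens G (W i))
    {lam : ℝ} (hlam : 0 ≤ lam)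
    {Wo : ι → Finset V} (hWone : ∀ i, (Wo i).Nonempty) (hWo : Wo.Injective) :
    (∑ i, dens G (W i)) ≥ (∑ i, dens G (Wo i)) ∧
    lam * (∑ i, ∑ j, if i < j then ddist (W i) (W j) else 0) ≥
      (1 / 2) * (lam * (∑ i, ∑ j, if i < j then ddist (Wo i) (Wo j) else 0)) := by
  constructor
  · exact sum_comp_le_sum_comp_of_forall_notMem_range hWo hW fun i j ↦ hmax j (Wo i) (hWone i)
  · rw [mul_left_comm]
    exact mul_le_mul_of_nonneg_left (half_mul_sum_ddist_le_sum_ddist hWne hW Wo) hlam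

/-- Lemma 7 of the paper. -/
theorem stmt_3 {V : Type*} [Fintype V] [DecidableEq V]
    (G : SimpleGraph V) {k : ℕ} (hk : 1 ≤ k)
    (W : Fin k → Finset V) (hWne : ∀ i, (W i).Nonempty)
    (hWinj : Function.Injective W)
    (hmax : ∀ i : Fin k, ∀ Z : Finset V, Z.Nonempty →
      (∀ j : Fin k, j < i → Z ≠ W j) → dens G Z ≤ dens G (W i))
    (lam : ℝ) (hlam : 0 < lam)
    (Wo : Fin k → Finset V) (hWone : ∀ i, (Wo i).Nonempty)
    (hWoinj : Function.Injective Wo) :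
    (∑ i, dens G (W i)) ≥ (∑ i, dens G (Wo i)) ∧
    lam * (∑ i, ∑ j, if i < j then ddist (W i) (W j) else 0) ≥
      (1 / 2) * (lam * (∑ i, ∑ j, if i < j then ddist (Wo i) (Wo j) else 0)) :=
  stmt_3_general G hWne hWinj (fun i Z hZ hZW ↦ hmax i Z hZ fun j _ hj ↦ hZW ⟨j, hj.symm⟩)
    hlam.le hWone hWoinj
end

section
/- Let V be a finite set and let W_1, …, W_t ⊆ V be subsets such that no two of them are crossing. Let Z ⊆ V be a nonempty subset with Z ≠ W_i for every 1 ≤ i ≤ t. Then there exist a set U_1 ⊆ Z with 1 ≤ |U_1| ≤ 2 and a set U_2 ⊆ V \ Z with |U_2| ≤ 1 such that no W_j (1 ≤ j ≤ t) satisfies both W_j ⊇ U_1 and W_j ∩ U_2 = ∅. -/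
open Finset

/-- Two subsets are crossing if they intersect and neither contains the other. -/
def Crossing {V : Type*} [DecidableEq V] (A B : Finset V) : Prop :=
  (A ∩ B).Nonempty ∧ (A \ B).Nonempty ∧ (B \ A).Nonempty

/-!
The members of the family that contain a fixed point `u ∈ Z` form a chain. Going up this chain, the
points of the finite set `Z` enter one after another; let `v` be the last to enter. Every member
containing `U₁ = {u, v}` then contains all of `Z`, and strictly so, since `Z` is not a member. The
members containing `Z` form a chain of finite sets, so the least one, if there is any, has a point
outside `Z`, which they all share; take it as the only point of `U₂`.
-/

theorem exists_isLeast_of_isChain {α : Type*} [Preorder α] [WellFoundedLT α] {s : Set α}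
    (hs : IsChain (· ≤ ·) s) (hne : s.Nonempty) : ∃ a, IsLeast s a := by
  obtain ⟨a, ha⟩ := exists_minimal_of_wellFoundedLT (· ∈ s) hne
  exact ⟨a, ha.prop, fun b hb ↦ (hs.total ha.prop hb).elim id (ha.le_of_le hb)⟩

section Chain

variable {V : Type*} {𝒞 : Set (Finset V)} {Z : Finset V}

theorem exists_mem_forall_mem_imp_subset_of_isChain (h𝒞 : IsChain (· ⊆ ·) 𝒞) (hZ : Z.Nonempty) :
    ∃ v ∈ Z, ∀ C ∈ 𝒞, v ∈ C → Z ⊆ C := by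
  obtain ⟨v, hvZ, hvmin⟩ := Z.exists_minimalFor (fun x ↦ {C ∈ 𝒞 | x ∈ C}) hZ
  refine ⟨v, hvZ, fun C hC hvC w hwZ ↦ ?_⟩
  by_contra hwC
  have members_w_le_v : {D ∈ 𝒞 | w ∈ D} ≤ {D ∈ 𝒞 | v ∈ D} := by
    rintro D ⟨hD, hwD⟩
    have hCD : C ⊆ D := (h𝒞.total hC hD).resolve_right fun hDC ↦ hwC (hDC hwD)
    exact ⟨hD, hCD hvC⟩
  exact hwC (hvmin hwZ members_w_le_v ⟨hC, hvC⟩).2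

theorem exists_card_le_one_disjoint_forall_not_disjoint_of_isChain (h𝒞 : IsChain (· ⊆ ·) 𝒞)
    (hZ : ∀ C ∈ 𝒞, Z ⊂ C) :
    ∃ U : Finset V, Disjoint U Z ∧ #U ≤ 1 ∧ ∀ C ∈ 𝒞, ¬ Disjoint C U := by
  rcases 𝒞.eq_empty_or_nonempty with rfl | hne
  · exact ⟨∅, disjoint_empty_left Z, by simp, by simp⟩
  · obtain ⟨C, hC, hCmin⟩ := exists_isLeast_of_isChain h𝒞 hne
    obtain ⟨x, hxC, hxZ⟩ := exists_of_ssubset (hZ C hC)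
    refine ⟨{x}, disjoint_singleton_left.2 hxZ, (card_singleton x).le, fun D hD ↦ ?_⟩
    simpa only [disjoint_singleton_right, not_not] using hCmin hD hxC

end Chain

section Laminar

variable {V : Type*} [DecidableEq V] {𝒲 : Set (Finset V)}

theorem subset_or_subset_of_not_crossing {A B : Finset V} {x : V} (h : ¬ Crossing A B)
    (hxA : x ∈ A) (hxB : x ∈ B) : A ⊆ B ∨ B ⊆ A := by
  contrapose! h
  exact ⟨⟨x, mem_inter.2 ⟨hxA, hxB⟩⟩, sdiff_nonempty.2 h.1, sdiff_nonempty.2 h.2⟩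

theorem isChain_sep_mem_of_pairwise_not_crossing (h𝒲 : 𝒲.Pairwise fun A B ↦ ¬ Crossing A B)
    (u : V) : IsChain (· ⊆ ·) {A ∈ 𝒲 | u ∈ A} :=
  fun _ hA _ hB hAB ↦ subset_or_subset_of_not_crossing (h𝒲 hA.1 hB.1 hAB) hA.2 hB.2

theorem stmt_5_general (h𝒲 : 𝒲.Pairwise fun A B ↦ ¬ Crossing A B) {Z : Finset V}
    (hZne : Z.Nonempty) (hZ : Z ∉ 𝒲) :
    ∃ U₁ U₂ : Finset V, U₁ ⊆ Z ∧ 1 ≤ #U₁ ∧ #U₁ ≤ 2 ∧ Disjoint U₂ Z ∧ #U₂ ≤ 1 ∧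
      ∀ A ∈ 𝒲, ¬ (U₁ ⊆ A ∧ Disjoint A U₂) := by
  have ⟨u, hu⟩ := hZne
  have chain_u := isChain_sep_mem_of_pairwise_not_crossing h𝒲 u
  obtain ⟨v, hv, hvZ⟩ := exists_mem_forall_mem_imp_subset_of_isChain chain_u hZne
  have chain_Z : IsChain (· ⊆ ·) {A ∈ 𝒲 | Z ⊆ A} :=
    chain_u.mono (Set.ofPred_subset_ofPred.2 fun _ hA ↦ ⟨hA.1, hA.2 hu⟩)
  obtain ⟨U₂, hU₂Z, hU₂card, hU₂⟩ :=
    exists_card_le_one_disjoint_forall_not_disjoint_of_isChain chain_Z fun A hA ↦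
      hA.2.ssubset_of_ne fun hZA ↦ hZ (hZA ▸ hA.1)
  refine ⟨{u, v}, U₂, insert_subset hu (singleton_subset_iff.2 hv),
    card_pos.2 (insert_nonempty u {v}), card_le_two, hU₂Z, hU₂card, ?_⟩
  rintro A hA ⟨huvA, hAU₂⟩
  obtain ⟨huA, hvA⟩ : u ∈ A ∧ v ∈ A := by
    simpa only [insert_subset_iff, singleton_subset_iff] using huvA
  exact hU₂ A ⟨hA, hvZ A ⟨hA, huA⟩ hvA⟩ hAU₂

end Laminar

/-- Lemma 9 of the paper. -/
theorem stmt_5 {V : Type*} [Fintype V] [DecidableEq V] {t : ℕ}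
    (W : Fin t → Finset V) (hcr : ∀ i j : Fin t, ¬ Crossing (W i) (W j))
    (Z : Finset V) (hZne : Z.Nonempty) (hZ : ∀ i, Z ≠ W i) :
    ∃ U₁ U₂ : Finset V, U₁ ⊆ Z ∧ 1 ≤ U₁.card ∧ U₁.card ≤ 2 ∧
      U₂ ⊆ Zᶜ ∧ U₂.card ≤ 1 ∧
      ∀ j : Fin t, ¬ (U₁ ⊆ W j ∧ W j ∩ U₂ = ∅) := by
  have noncrossing : (Set.range W).Pairwise fun A B ↦ ¬ Crossing A B :=
    fun _ ⟨i, hi⟩ _ ⟨j, hj⟩ _ ↦ hi ▸ hj ▸ hcr i j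
  simpa only [Set.forall_mem_range, disjoint_iff_inter_eq_empty, subset_compl_iff_disjoint_right]
    using stmt_5_general noncrossing hZne fun ⟨i, hi⟩ ↦ hZ i hi.symm
end

section
/- Let V be a finite set with |V| > 5 and let W_i, W_j ⊆ V be crossing subsets with |W_i ∩ W_j| ≥ 4. Then the family of sets { W_i ∪ {v} : v ∈ V \ W_i } ∪ { W_j ∪ {u} : u ∈ V \ W_j } ∪ { W_j \ {w} : w ∈ W_i ∩ W_j } contains at least |V| - 1 pairwise distinct sets. -/
open Finset

/-!
Every set `insert v Wi` or `insert u Wj` contains `Wi ∩ Wj`, while `Wj.erase w` with `w ∈ Wi ∩ Wj`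
does not, so the erasures contribute `#(Wi ∩ Wj)` further sets. For `Wi ≠ Wj` the only set that can
be of both forms `insert v Wi` and `insert u Wj` is `Wi ∪ Wj`, so at most one of the
`#Wiᶜ + #Wjᶜ ≥ #(Wi ∩ Wj)ᶜ` insertions is lost; for `Wi = Wj` there are exactly `#(Wi ∩ Wj)ᶜ`
insertions.
-/

section InsertErase

variable {α : Type*} [DecidableEq α] {s t u v : Finset α}

lemma card_image_insert_of_disjoint (hu : Disjoint u s) :
    #(u.image fun a => insert a s) = #u :=
  card_image_of_injOn <| (insert_inj_on s).mono fun _ ha => disjoint_left.mp hu ha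

lemma card_image_erase_of_subset (h : u ⊆ s) : #(u.image fun a => s.erase a) = #u :=
  card_image_of_injOn <| (erase_injOn s).mono <| coe_subset.mpr h

lemma disjoint_image_insert_image_erase (h : v ⊆ s) :
    Disjoint (u.image fun a => insert a s) (v.image fun b => t.erase b) := by
  simp only [disjoint_left, mem_image]
  rintro _ ⟨a, -, rfl⟩ ⟨b, hb, heq⟩
  have hmem : b ∈ t.erase b := heq ▸ mem_insert_of_mem (h hb)
  exact notMem_erase b t hmem

lemma insert_eq_union_of_insert_eq_insert {a b : α} (hst : s ≠ t) (ha : a ∉ s) (hb : b ∉ t)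
    (h : insert a s = insert b t) : insert a s = s ∪ t := by
  have hat : a ∈ t := by
    by_contra hat
    obtain rfl : a = b := (mem_insert.mp (h ▸ mem_insert_self a s)).resolve_right hat
    exact hst (by rw [← erase_insert ha, h, erase_insert hb])
  apply Subset.antisymm
  · exact insert_subset (mem_union_right s hat) subset_union_left
  · exact union_subset (subset_insert a s) (h ▸ subset_insert b t)

lemma card_image_insert_inter_image_insert_le_one (hst : s ≠ t) (hu : Disjoint u s)
    (hv : Disjoint v t) :
    #((u.image fun a => insert a s) ∩ (v.image fun b => insert b t)) ≤ 1 := by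
  suffices hsub : (u.image fun a => insert a s) ∩ (v.image fun b => insert b t) ⊆ {s ∪ t} from
    card_le_card hsub
  intro S hS
  simp only [mem_inter, mem_image] at hS
  obtain ⟨⟨a, ha, rfl⟩, b, hb, h⟩ := hS
  exact mem_singleton.mpr <| insert_eq_union_of_insert_eq_insert hst
    (disjoint_left.mp hu ha) (disjoint_left.mp hv hb) h.symm

lemma card_union_le_card_image_insert_union_image_insert_add_one (hu : Disjoint u s)
    (hv : Disjoint v t) :
    #(u ∪ v) ≤ #((u.image fun a => insert a s) ∪ (v.image fun b => insert b t)) + 1 := by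
  obtain rfl | hst := eq_or_ne s t
  · rw [← image_union, card_image_insert_of_disjoint (disjoint_union_left.mpr ⟨hu, hv⟩)]
    exact Nat.le_succ _
  · calc
      #(u ∪ v) ≤ #u + #v := card_union_le u v
      _ = #(u.image fun a => insert a s) + #(v.image fun b => insert b t) := by
        rw [card_image_insert_of_disjoint hu, card_image_insert_of_disjoint hv]
      _ = #((u.image fun a => insert a s) ∪ (v.image fun b => insert b t)) +
          #((u.image fun a => insert a s) ∩ (v.image fun b => insert b t)) :=
        (card_union_add_card_inter _ _).symm
      _ ≤ _ := by
        gcongr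
        exact card_image_insert_inter_image_insert_le_one hst hu hv

end InsertErase

theorem stmt_9_general {V : Type*} [Fintype V] [DecidableEq V] (Wi Wj : Finset V) :
    Fintype.card V - 1 ≤
      #((Wiᶜ.image fun v => insert v Wi) ∪ (Wjᶜ.image fun u => insert u Wj) ∪
        ((Wi ∩ Wj).image fun w => Wj.erase w)) := by
  have hdisj : Disjoint ((Wiᶜ.image fun v => insert v Wi) ∪ (Wjᶜ.image fun u => insert u Wj))
      ((Wi ∩ Wj).image fun w => Wj.erase w) :=
    disjoint_union_left.mpr ⟨disjoint_image_insert_image_erase inter_subset_left,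
      disjoint_image_insert_image_erase inter_subset_right⟩
  have hinsert : #(Wi ∩ Wj)ᶜ ≤
      #((Wiᶜ.image fun v => insert v Wi) ∪ (Wjᶜ.image fun u => insert u Wj)) + 1 := by
    rw [compl_inter]
    exact card_union_le_card_image_insert_union_image_insert_add_one
      disjoint_compl_left disjoint_compl_left
  rw [card_union_of_disjoint hdisj, card_image_erase_of_subset inter_subset_right,
    ← card_add_card_compl (Wi ∩ Wj)]
  lia

/-- counting claim, second case of the proof of Lemma 11 of the paper. -/
theorem stmt_9 {V : Type*} [Fintype V] [DecidableEq V]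
    (hV : 5 < Fintype.card V) (Wi Wj : Finset V) (hcr : Crossing Wi Wj)
    (hint : 4 ≤ (Wi ∩ Wj).card) :
    Fintype.card V - 1 ≤
      ((Wiᶜ.image fun v => insert v Wi) ∪ (Wjᶜ.image fun u => insert u Wj) ∪
        ((Wi ∩ Wj).image fun w => Wj.erase w)).card :=
  stmt_9_general Wi Wj
end

section
/- Let G = (V,E) be a finite simple graph, let W ⊆ V with |W| ≥ 2, and let S ⊆ W. Then ∑_{u ∈ S} dens(W \ {u}) ≥ (|S| - 2) · dens(W). -/
open Finset

/-!
Each edge inside `W` is lost in at most two of the deletions `W \ {u}`, `u ∈ S`, so these sets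
together span at least `(|S| - 2) |E(W)|` edges. Dividing every term by `|W|` instead of by
`|W \ {u}| ≤ |W|` only makes it smaller.
-/

section EdgesWithin

variable {V : Type*}

open Classical in
/-- The edge set `E(U)`, for counting edges by finite sums. It is cut out of `U.sym2` rather than of
all of `Sym2 V`, which makes it finite because `U` is. -/
noncomputable def edgesWithin (G : SimpleGraph V) (U : Finset V) : Finset (Sym2 V) :=
  {e ∈ U.sym2 | e ∈ G.edgeSet}

lemma mem_edgesWithin {G : SimpleGraph V} {U : Finset V} {e : Sym2 V} :
    e ∈ edgesWithin G U ↔ e ∈ G.edgeSet ∧ ∀ v ∈ e, v ∈ U := by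
  simp only [edgesWithin, mem_filter, mem_sym2_iff, and_comm]

lemma edgeCount_eq_card_edgesWithin (G : SimpleGraph V) (U : Finset V) :
    edgeCount G U = #(edgesWithin G U) := by
  rw [edgeCount, ← Set.ncard_coe_finset]
  congr 1 with e
  exact mem_edgesWithin.symm

variable [DecidableEq V]

lemma edgesWithin_erase (G : SimpleGraph V) (W : Finset V) (u : V) :
    edgesWithin G (W.erase u) = {e ∈ edgesWithin G W | u ∉ e} := by
  ext e
  simp only [mem_filter, mem_edgesWithin, mem_erase]
  grind

lemma edgeCount_erase_add_card_filter_mem (G : SimpleGraph V) (W : Finset V) (u : V) :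
    edgeCount G (W.erase u) + #{e ∈ edgesWithin G W | u ∈ e} = edgeCount G W := by
  rw [edgeCount_eq_card_edgesWithin, edgeCount_eq_card_edgesWithin, edgesWithin_erase, add_comm,
    card_filter_add_card_filter_not]

lemma card_filter_mem_sym2_le_two (S : Finset V) (e : Sym2 V) : #{u ∈ S | u ∈ e} ≤ 2 := by
  have subset_endpoints : {u ∈ S | u ∈ e} ⊆ e.toFinset := fun u hu ↦
    Sym2.mem_toFinset.2 (mem_filter.1 hu).2
  calc #{u ∈ S | u ∈ e}
      ≤ #e.toFinset := card_le_card subset_endpoints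
    _ ≤ 2 := by rw [Sym2.card_toFinset]; split_ifs <;> norm_num

lemma sum_card_filter_mem_sym2_le (S : Finset V) (F : Finset (Sym2 V)) :
    ∑ u ∈ S, #{e ∈ F | u ∈ e} ≤ 2 * #F :=
  calc ∑ u ∈ S, #{e ∈ F | u ∈ e}
      = ∑ e ∈ F, #{u ∈ S | u ∈ e} := sum_card_bipartiteAbove_eq_sum_card_bipartiteBelow _
    _ ≤ #F * 2 := sum_le_card_nsmul _ _ _ fun e _ ↦ card_filter_mem_sym2_le_two S e
    _ = 2 * #F := mul_comm _ _

lemma card_mul_edgeCount_le_sum_erase_add (G : SimpleGraph V) (W S : Finset V) :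
    #S * edgeCount G W ≤ ∑ u ∈ S, edgeCount G (W.erase u) + 2 * edgeCount G W :=
  calc #S * edgeCount G W
      = ∑ u ∈ S, (edgeCount G (W.erase u) + #{e ∈ edgesWithin G W | u ∈ e}) := by
        simp only [edgeCount_erase_add_card_filter_mem, sum_const, smul_eq_mul]
    _ = ∑ u ∈ S, edgeCount G (W.erase u) + ∑ u ∈ S, #{e ∈ edgesWithin G W | u ∈ e} :=
        sum_add_distrib
    _ ≤ ∑ u ∈ S, edgeCount G (W.erase u) + 2 * edgeCount G W := by
        rw [edgeCount_eq_card_edgesWithin G W]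
        gcongr
        exact sum_card_filter_mem_sym2_le S _

end EdgesWithin

lemma edgeCount_div_card_le_dens {V : Type*} (G : SimpleGraph V) {U W : Finset V}
    (hU : U.Nonempty) (hUW : U ⊆ W) :
    (edgeCount G U : ℝ) / #W ≤ dens G U := by
  have card_le : (#U : ℝ) ≤ #W := mod_cast card_le_card hUW
  exact div_le_div_of_nonneg_left (Nat.cast_nonneg _) (mod_cast hU.card_pos) card_le

theorem stmt_11_general {V : Type*} [DecidableEq V] (G : SimpleGraph V) (W : Finset V)
    (hW : 2 ≤ #W) (S : Finset V) :
    ((#S : ℝ) - 2) * dens G W ≤ ∑ u ∈ S, dens G (W.erase u) := by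
  have erase_nonempty (u : V) : (W.erase u).Nonempty :=
    (one_lt_card_iff_nontrivial.1 hW).erase_nonempty
  have sum_edgeCount : ((#S : ℝ) - 2) * edgeCount G W ≤ ∑ u ∈ S, (edgeCount G (W.erase u) : ℝ) := by
    rw [sub_mul, sub_le_iff_le_add]
    exact_mod_cast card_mul_edgeCount_le_sum_erase_add G W S
  calc ((#S : ℝ) - 2) * dens G W
      = ((#S : ℝ) - 2) * edgeCount G W / #W := (mul_div_assoc _ _ _).symm
    _ ≤ (∑ u ∈ S, (edgeCount G (W.erase u) : ℝ)) / #W := by gcongr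
    _ = ∑ u ∈ S, (edgeCount G (W.erase u) : ℝ) / #W := sum_div _ _ _
    _ ≤ ∑ u ∈ S, dens G (W.erase u) := sum_le_sum fun u _ ↦
        edgeCount_div_card_le_dens G (erase_nonempty u) (erase_subset u W)

/-- vertex-deletion averaging inequality, proof of Lemma 12 of the paper. -/
theorem stmt_11 {V : Type*} [Fintype V] [DecidableEq V]
    (G : SimpleGraph V) (W : Finset V) (hW : 2 ≤ W.card)
    (S : Finset V) (hS : S ⊆ W) :
    ∑ u ∈ S, dens G (W.erase u) ≥ ((S.card : ℝ) - 2) * dens G W := by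
  exact stmt_11_general G W hW S
end

section
/- Let G = (V,E) be a finite simple graph, let k ≥ 1, and let W_1, …, W_k be pairwise distinct nonempty subsets of V such that, for every 1 ≤ i ≤ k and every nonempty Z ⊆ V with Z ≠ W_1, …, Z ≠ W_{i-1}, one has dens(W_i) ≥ (1/2) · dens(Z). Then for every tuple W°_1, …, W°_k of pairwise distinct nonempty subsets of V: ∑_{i=1}^k dens(W_i) ≥ (1/2) · ∑_{i=1}^k dens(W°_i). -/
open Finset

/-!
Permute the `Wo i` so that each one that occurs among the `W j` is paired with an equal `W j`. Every
other `Wo i` differs from all the `W j`, so it competed with whichever `W j` it is paired with. The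
sums can then be compared term by term.
-/

section Reindexing

variable {ι α : Type*} {b : ι → α}

theorem exists_perm_forall_mem_range_eq [Finite ι] (a : ι → α) (hb : Function.Injective b) :
    ∃ σ : Equiv.Perm ι, ∀ i, b i ∈ Set.range a → a (σ i) = b i := by
  have : Fintype ι := Fintype.ofFinite ι
  choose! τ hτ using fun i (hi : b i ∈ Set.range a) ↦ Set.mem_range.1 hi
  have τ_injOn : Set.InjOn τ {i | b i ∈ Set.range a} := fun i hi j hj hij ↦
    hb <| by rw [← hτ i hi, ← hτ j hj, hij]
  obtain ⟨e, he⟩ := Set.MapsTo.exists_equiv_extend_of_card_eq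
    card_univ.symm (fun i _ ↦ mem_univ (τ i)) τ_injOn
  exact ⟨e.trans (Equiv.subtypeUnivEquiv mem_univ), fun i hi ↦ by simp [he i hi, hτ i hi]⟩

theorem sum_comp_le_sum_comp_of_forall_notMem_range_s13 [Fintype ι] {M : Type*} [AddCommMonoid M]
    [PartialOrder M] [IsOrderedAddMonoid M] {f g : α → M} {a : ι → α}
    (hgf : ∀ i, g (a i) ≤ f (a i))
    (hga : ∀ i j, b j ∉ Set.range a → g (b j) ≤ f (a i)) (hb : Function.Injective b) :
    ∑ i, g (b i) ≤ ∑ i, f (a i) := by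
  obtain ⟨σ, hσ⟩ := exists_perm_forall_mem_range_eq a hb
  have g_le_f_perm (i : ι) : g (b i) ≤ f (a (σ i)) := by
    by_cases hi : b i ∈ Set.range a
    · rw [← hσ i hi]
      exact hgf (σ i)
    · exact hga (σ i) i hi
  calc ∑ i, g (b i) ≤ ∑ i, f (a (σ i)) := sum_le_sum fun i _ ↦ g_le_f_perm i
    _ = ∑ i, f (a i) := Equiv.sum_comp σ (f ∘ a)

end Reindexing

theorem dens_nonneg {V : Type*} (G : SimpleGraph V) (U : Finset V) : 0 ≤ dens G U :=
  div_nonneg (Nat.cast_nonneg _) (Nat.cast_nonneg _)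

theorem stmt_13_general {V ι : Type*} [Fintype ι] (G : SimpleGraph V) {c : ℝ} (hc : c ≤ 1)
    {W Wo : ι → {U : Finset V // U.Nonempty}}
    (hW : ∀ i, ∀ Z ∉ Set.range W, c * dens G Z ≤ dens G (W i)) (hWo : Function.Injective Wo) :
    c * ∑ i, dens G (Wo i) ≤ ∑ i, dens G (W i) := by
  rw [mul_sum]
  exact sum_comp_le_sum_comp_of_forall_notMem_range_s13 (a := W) (b := Wo) (f := fun Z ↦ dens G Z)
    (g := fun Z ↦ c * dens G Z) (fun i ↦ mul_le_of_le_one_left (dens_nonneg G (W i)) hc)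
    (fun i j ↦ hW i (Wo j)) hWo

/-- inductive core of Lemma 13 of the paper. -/
theorem stmt_13 {V : Type*} [Fintype V] [DecidableEq V]
    (G : SimpleGraph V) {k : ℕ} (hk : 1 ≤ k)
    (W : Fin k → Finset V) (hWne : ∀ i, (W i).Nonempty)
    (hWinj : Function.Injective W)
    (hhalf : ∀ i : Fin k, ∀ Z : Finset V, Z.Nonempty →
      (∀ j : Fin k, j < i → Z ≠ W j) → dens G (W i) ≥ (1 / 2) * dens G Z)
    (Wo : Fin k → Finset V) (hWone : ∀ i, (Wo i).Nonempty)
    (hWoinj : Function.Injective Wo) :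
    (∑ i, dens G (W i)) ≥ (1 / 2) * (∑ i, dens G (Wo i)) :=
  stmt_13_general G one_half_lt_one.le (W := fun i ↦ ⟨W i, hWne i⟩) (Wo := fun i ↦ ⟨Wo i, hWone i⟩)
    (fun i Z hZ ↦ hhalf i Z Z.2 fun j _ hj ↦ hZ ⟨j, Subtype.ext hj.symm⟩)
    fun _ _ h ↦ hWoinj (congrArg Subtype.val h)
end
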